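/- arXiv:1505.05496 — 2 statements merged into one kernel-verified Lean document; each statement's English description precedes it below -/
import Mathlib

section
/- For integers n and t with n ≥ 2t + 2 and t ≥ 1, D_R(G4) − D_R(G⁰(n,t)) = (8/3)n + (4/3)t − 12, where G4 is the cactus on n vertices obtained from G⁰(n,t) by moving one pendent edge from the common vertex v1 to a vertex v2 ≠ v1 of one of the triangles (so G4 consists of t triangles and n − 2t − 2 pendent edges at v1, together with one pendent edge attached at a non-central vertex v2 of a triangle). -/
open Finset

/-- Effective resistance between two vertices of a graph (for a connected graph
this is the effective resistance when every edge is a unit resistor), defined via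
the matrix-tree / spanning-two-forest determinant formula. -/
noncomputable def effRes {V : Type*} [Finite V] (G : SimpleGraph V) (u v : V) : ℝ :=
  letI := Fintype.ofFinite V
  letI := Classical.decEq V
  letI : DecidableRel G.Adj := Classical.decRel _
  if u = v then 0
  else
    Matrix.det ((G.lapMatrix ℝ).submatrix
        (fun w : {w : V // w ≠ u ∧ w ≠ v} => (w : V)) (fun w => (w : V)))
      / Matrix.det ((G.lapMatrix ℝ).submatrix
        (fun w : {w : V // w ≠ u} => (w : V)) (fun w => (w : V)))

/-- The degree resistance distance `D_R(G) = Σ_{ {u,v} ⊆ V } (d(u)+d(v)) R(u,v)`. -/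
noncomputable def degRes {V : Type*} [Finite V] (G : SimpleGraph V) : ℝ :=
  letI := Fintype.ofFinite V
  letI := Classical.decEq V
  letI : DecidableRel G.Adj := Classical.decRel _
  (1 / 2) * ∑ u : V, ∑ v : V, ((G.degree u : ℝ) + (G.degree v : ℝ)) * effRes G u v

/-- The Kirchhoff index `Kf(G) = Σ_{ {u,v} ⊆ V } R(u,v)`. -/
noncomputable def kirchhoffIndex {V : Type*} [Finite V] (G : SimpleGraph V) : ℝ :=
  letI := Fintype.ofFinite V
  (1 / 2) * ∑ u : V, ∑ v : V, effRes G u v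

/-- `Kf_v(G) = Σ_{u ∈ V} R(u,v)`. -/
noncomputable def Kfv {V : Type*} [Finite V] (G : SimpleGraph V) (v : V) : ℝ :=
  letI := Fintype.ofFinite V
  ∑ u : V, effRes G u v

/-- `D_v(G) = Σ_{u ∈ V} d(u) R(u,v)`. -/
noncomputable def Dv {V : Type*} [Finite V] (G : SimpleGraph V) (v : V) : ℝ :=
  letI := Fintype.ofFinite V
  letI := Classical.decEq V
  letI : DecidableRel G.Adj := Classical.decRel _
  ∑ u : V, (G.degree u : ℝ) * effRes G u v

/-- A subgraph is a cycle if it is connected and `2`-regular. -/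
def IsCycleSubgraph {V : Type*} {G : SimpleGraph V} (H : G.Subgraph) : Prop :=
  H.coe.Connected ∧ ∀ v ∈ H.verts, {u | H.Adj v u}.ncard = 2

/-- A cactus is a connected graph in which any two distinct cycles share at most
one vertex (equivalently, every block is an edge or a cycle). -/
def IsCactus {V : Type*} (G : SimpleGraph V) : Prop :=
  G.Connected ∧ ∀ H₁ H₂ : G.Subgraph, IsCycleSubgraph H₁ → IsCycleSubgraph H₂ →
    H₁ ≠ H₂ → (H₁.verts ∩ H₂.verts).ncard ≤ 1

/-- The number of cycles of a graph. -/
noncomputable def numCycles {V : Type*} (G : SimpleGraph V) : ℕ :=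
  {H : G.Subgraph | IsCycleSubgraph H}.ncard

/-- `G ∈ Cact(n;t)`: `G` is a cactus with `n` vertices and `t` cycles. -/
def MemCact {V : Type*} (n t : ℕ) (G : SimpleGraph V) : Prop :=
  IsCactus G ∧ Nat.card V = n ∧ numCycles G = t

/-- `G⁰(n,t)`: `t` triangles (on vertices `2i+1, 2i+2`, `i < t`) and `n - 2t - 1`
pendent edges, all sharing the common vertex `0`. -/
def G0 (n t : ℕ) : SimpleGraph (Fin n) :=
  SimpleGraph.fromRel (fun a b =>
    a.val = 0 ∨ (Odd a.val ∧ b.val = a.val + 1 ∧ b.val ≤ 2 * t))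

/-- `G3`: `t` triangles, `n - 2t - 3` pendent edges, and one pendent path of
length 2 (through `2t+1` to `2t+2`), all attached at the common vertex `0`. -/
def G3g (n t : ℕ) : SimpleGraph (Fin n) :=
  SimpleGraph.fromRel (fun a b =>
    (a.val = 0 ∧ b.val ≠ 2 * t + 2) ∨
    (Odd a.val ∧ b.val = a.val + 1 ∧ b.val ≤ 2 * t) ∨
    (a.val = 2 * t + 1 ∧ b.val = 2 * t + 2))

/-- `G4`: `t` triangles and `n - 2t - 2` pendent edges at the common vertex `0`,
together with one pendent edge (to `2t+1`) attached at the triangle vertex `1`. -/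
def G4g (n t : ℕ) : SimpleGraph (Fin n) :=
  SimpleGraph.fromRel (fun a b =>
    (a.val = 0 ∧ b.val ≠ 2 * t + 1) ∨
    (Odd a.val ∧ b.val = a.val + 1 ∧ b.val ≤ 2 * t) ∨
    (a.val = 1 ∧ b.val = 2 * t + 1))

/-- `G5`: `t - 1` triangles, one quadrilateral `C₄` (on `0, 2t-1, 2t, 2t+1`), and
`n - 2t - 2` pendent edges, all sharing the common vertex `0`. -/
def G5g (n t : ℕ) : SimpleGraph (Fin n) :=
  SimpleGraph.fromRel (fun a b =>
    (a.val = 0 ∧ b.val ≠ 2 * t) ∨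
    (Odd a.val ∧ b.val = a.val + 1 ∧ b.val ≤ 2 * t - 2) ∨
    (a.val = 2 * t - 1 ∧ b.val = 2 * t) ∨
    (a.val = 2 * t ∧ b.val = 2 * t + 1))

/-- `G6`: `t - 1` triangles, one quadrilateral `C₄` (on `0, 2t-1, 2t, 2t+1`), and
`n - 2t - 3` pendent edges at the common vertex `0`, together with one pendent edge
(to `2t+2`) attached at the quadrilateral vertex `2t-1`, which is adjacent to `0`. -/
def G6g (n t : ℕ) : SimpleGraph (Fin n) :=
  SimpleGraph.fromRel (fun a b =>
    (a.val = 0 ∧ b.val ≠ 2 * t ∧ b.val ≠ 2 * t + 2) ∨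
    (Odd a.val ∧ b.val = a.val + 1 ∧ b.val ≤ 2 * t - 2) ∨
    (a.val = 2 * t - 1 ∧ (b.val = 2 * t ∨ b.val = 2 * t + 2)) ∨
    (a.val = 2 * t ∧ b.val = 2 * t + 1))

/-- `G7`: `t - 1` triangles, one quadrilateral `C₄` (on `0, 2t-1, 2t, 2t+1`), and
`n - 2t - 3` pendent edges at the common vertex `0`, together with one pendent edge
(to `2t+2`) attached at the quadrilateral vertex `2t`, which is opposite to `0`. -/
def G7g (n t : ℕ) : SimpleGraph (Fin n) :=
  SimpleGraph.fromRel (fun a b =>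
    (a.val = 0 ∧ b.val ≠ 2 * t ∧ b.val ≠ 2 * t + 2) ∨
    (Odd a.val ∧ b.val = a.val + 1 ∧ b.val ≤ 2 * t - 2) ∨
    (a.val = 2 * t - 1 ∧ b.val = 2 * t) ∨
    (a.val = 2 * t ∧ (b.val = 2 * t + 1 ∨ b.val = 2 * t + 2)))

/-- `G8`: `t - 2` triangles, two quadrilaterals `C₄` (on `0, 2t-3, 2t-2, 2t-1` and
on `0, 2t, 2t+1, 2t+2`), and `n - 2t - 3` pendent edges, all sharing the common
vertex `0`. -/
def G8g (n t : ℕ) : SimpleGraph (Fin n) :=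
  SimpleGraph.fromRel (fun a b =>
    (a.val = 0 ∧ b.val ≠ 2 * t - 2 ∧ b.val ≠ 2 * t + 1) ∨
    (Odd a.val ∧ b.val = a.val + 1 ∧ b.val ≤ 2 * t - 4) ∨
    (a.val = 2 * t - 3 ∧ b.val = 2 * t - 2) ∨
    (a.val = 2 * t - 2 ∧ b.val = 2 * t - 1) ∨
    (a.val = 2 * t ∧ b.val = 2 * t + 1) ∨
    (a.val = 2 * t + 1 ∧ b.val = 2 * t + 2))

/-- `G9`: `t - 1` triangles, one quadrilateral `C₄` (on `0, 2t-1, 2t, 2t+1`), and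
`n - 2t - 3` pendent edges at the common vertex `0`, together with one pendent edge
(to `2t+2`) attached at the non-central triangle vertex `1`. -/
def G9g (n t : ℕ) : SimpleGraph (Fin n) :=
  SimpleGraph.fromRel (fun a b =>
    (a.val = 0 ∧ b.val ≠ 2 * t ∧ b.val ≠ 2 * t + 2) ∨
    (Odd a.val ∧ b.val = a.val + 1 ∧ b.val ≤ 2 * t - 2) ∨
    (a.val = 2 * t - 1 ∧ b.val = 2 * t) ∨
    (a.val = 2 * t ∧ b.val = 2 * t + 1) ∨
    (a.val = 1 ∧ b.val = 2 * t + 2))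

/-- `G10`: `t - 1` triangles, one pentagon `C₅` (on `0, 2t-1, 2t, 2t+1, 2t+2`), and
`n - 2t - 3` pendent edges, all sharing the common vertex `0`. -/
def G10g (n t : ℕ) : SimpleGraph (Fin n) :=
  SimpleGraph.fromRel (fun a b =>
    (a.val = 0 ∧ b.val ≠ 2 * t ∧ b.val ≠ 2 * t + 1) ∨
    (Odd a.val ∧ b.val = a.val + 1 ∧ b.val ≤ 2 * t - 2) ∨
    (a.val = 2 * t - 1 ∧ b.val = 2 * t) ∨
    (a.val = 2 * t ∧ b.val = 2 * t + 1) ∨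
    (a.val = 2 * t + 1 ∧ b.val = 2 * t + 2))

/-! ### General facts on the effective resistance -/

theorem degRes_eq_aux {V : Type*} [Fintype V] [DecidableEq V] (G : SimpleGraph V)
    [DecidableRel G.Adj] :
    degRes G = (1 / 2) * ∑ u : V, ∑ v : V,
      ((G.degree u : ℝ) + (G.degree v : ℝ)) * effRes G u v := by
  unfold degRes
  congr!

theorem effRes_unfold_aux {V : Type*} [Fintype V] [DecidableEq V] (G : SimpleGraph V)
    [DecidableRel G.Adj] (u v : V) (huv : u ≠ v) :
    effRes G u v = Matrix.det ((G.lapMatrix ℝ).submatrix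
        (fun w : {w : V // w ≠ u ∧ w ≠ v} => (w : V)) (fun w => (w : V)))
      / Matrix.det ((G.lapMatrix ℝ).submatrix
        (fun w : {w : V // w ≠ u} => (w : V)) (fun w => (w : V))) := by
  unfold effRes
  simp only [if_neg huv]
  congr!

theorem det_mul_eq_minor_aux {m : Type*} [Fintype m] [DecidableEq m] (A : Matrix m m ℝ) (x : m → ℝ)
    (v : m) (h : A.mulVec x = Pi.single v 1) :
    A.det * x v = Matrix.det (A.submatrix (fun w : {w : m // ¬ w = v} => (w : m))
      (fun w => (w : m))) := by
  have h1 : A.det * x v = A.adjugate v v := by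
    have h2 : A.adjugate.mulVec (A.mulVec x) = A.det • x := by
      rw [Matrix.mulVec_mulVec, Matrix.adjugate_mul, Matrix.smul_mulVec, Matrix.one_mulVec]
    rw [h] at h2
    have h3 := congrFun h2 v
    simpa using h3.symm
  rw [h1, Matrix.adjugate_apply, Matrix.twoBlockTriangular_det' _ (fun i => i = v)]
  · have e1 : Matrix.det (Matrix.toSquareBlockProp (A.updateRow v (Pi.single v 1))
        (fun i => i = v)) = 1 := by
      rw [Matrix.det_unique]
      have hv : ((default : {i : m // i = v}) : m) = v := (default : {i : m // i = v}).2
      simp [Matrix.toSquareBlockProp, Matrix.updateRow_apply, hv]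
    have e2 : ∀ a b c : ℝ, a = 1 → b = c → a * b = c := by
      rintro a b c rfl rfl
      exact one_mul _
    refine e2 _ _ _ (by convert e1) ?_
    congr 1
    ext i j
    simp [Matrix.toSquareBlockProp, Matrix.updateRow_apply, i.2]
  · rintro i rfl j hj
    simp [hj]

theorem det_reduced_ne_zero_aux {V : Type*} [Fintype V] [DecidableEq V] (G : SimpleGraph V)
    [DecidableRel G.Adj] (hG : G.Connected) (u : V) :
    Matrix.det ((G.lapMatrix ℝ).submatrix
        (fun w : {w : V // w ≠ u} => (w : V)) (fun w => (w : V))) ≠ 0 := by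
  intro h0
  obtain ⟨y, hy, hy0⟩ := Matrix.exists_mulVec_eq_zero_iff.mpr h0
  let Y : V → ℝ := fun w => if h : w ≠ u then y ⟨w, h⟩ else 0
  have hYu : Y u = 0 := by simp [Y]
  have hYw : ∀ w : {w : V // w ≠ u}, Y w = y w := by
    rintro ⟨w, hw⟩
    simp [Y, hw]
  have key : ∀ w : V, Y w * ((G.lapMatrix ℝ).mulVec Y) w = 0 := by
    intro w
    by_cases hw : w = u
    · rw [hw, hYu, zero_mul]
    · have h1 := congrFun hy0 ⟨w, hw⟩
      have h2 : ((G.lapMatrix ℝ).mulVec Y) w = 0 := by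
        refine Eq.trans ?_ h1
        simp only [Matrix.mulVec, dotProduct, Matrix.submatrix_apply]
        rw [← Fintype.sum_subtype_add_sum_subtype (fun w => w ≠ u)]
        simp only [hYw]
        rw [add_eq_left]
        apply Finset.sum_eq_zero
        rintro ⟨z, hz⟩ -
        have hz' : z = u := by simpa using hz
        simp [hz', hYu]
      rw [h2, mul_zero]
  have hq : Matrix.toLinearMap₂' ℝ (G.lapMatrix ℝ) Y Y = 0 := by
    rw [Matrix.toLinearMap₂'_apply', dotProduct]
    exact Finset.sum_eq_zero fun w _ => key w
  rw [SimpleGraph.lapMatrix_toLinearMap₂'_apply'_eq_zero_iff_forall_reachable] at hq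
  apply hy
  ext w
  rw [← hYw w, hq w u (hG.preconnected _ _), hYu]
  rfl

theorem effRes_eq_aux {V : Type*} [Fintype V] [DecidableEq V] (G : SimpleGraph V)
    [DecidableRel G.Adj] (hG : G.Connected) (u v : V) (x : V → ℝ)
    (h : (G.lapMatrix ℝ).mulVec x = Pi.single v 1 - Pi.single u 1) :
    effRes G u v = x v - x u := by
  by_cases huv : u = v
  · subst huv
    simp [effRes]
  rw [effRes_unfold_aux G u v huv]
  have hd := det_reduced_ne_zero_aux G hG u
  have hvu : v ≠ u := fun h => huv h.symm
  set A : Matrix {w : V // w ≠ u} {w : V // w ≠ u} ℝ := (G.lapMatrix ℝ).submatrix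
        (fun w : {w : V // w ≠ u} => (w : V)) (fun w => (w : V)) with hA
  have hAx : A.mulVec (fun w : {w : V // w ≠ u} => x w - x u) = Pi.single ⟨v, hvu⟩ 1 := by
    ext w
    have h1 := congrFun h w.1
    have h2 : (G.lapMatrix ℝ).mulVec (fun w => x w - x u) w.1 =
        (G.lapMatrix ℝ).mulVec x w.1 := by
      have e : (fun w => x w - x u) = x - (x u) • (fun _ : V => (1 : ℝ)) := by
        ext; simp
      rw [e, Matrix.mulVec_sub, Matrix.mulVec_smul, SimpleGraph.lapMatrix_mulVec_const_eq_zero]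
      simp
    rw [h1] at h2
    have h3 : A.mulVec (fun w : {w : V // w ≠ u} => x w - x u) w =
        (G.lapMatrix ℝ).mulVec (fun w => x w - x u) w.1 := by
      simp only [Matrix.mulVec, dotProduct, hA, Matrix.submatrix_apply]
      rw [← Fintype.sum_subtype_add_sum_subtype (fun w => w ≠ u)]
      rw [left_eq_add]
      apply Finset.sum_eq_zero
      rintro ⟨z, hz⟩ -
      have hz' : z = u := by simpa using hz
      simp [hz']
    rw [h3, h2]
    obtain ⟨w, hw⟩ := w
    simp [Pi.single_apply, hw]
  have h4 := det_mul_eq_minor_aux A (fun w : {w : V // w ≠ u} => x w - x u) ⟨v, hvu⟩ (by convert hAx)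
  rw [div_eq_iff hd, mul_comm, h4]
  let e : {w : {w : V // w ≠ u} // ¬ w = ⟨v, hvu⟩} ≃ {w : V // w ≠ u ∧ w ≠ v} :=
    { toFun := fun w => ⟨w.1.1, w.1.2, fun h => w.2 (Subtype.ext h)⟩
      invFun := fun w => ⟨⟨w.1, w.2.1⟩, fun h => w.2.2 (congrArg Subtype.val h)⟩
      left_inv := fun w => rfl
      right_inv := fun w => rfl }
  rw [← Matrix.det_submatrix_equiv_self e]
  rfl

/-- Degree resistance distance from a grounded Green function `g`. -/
theorem degRes_green_aux {V : Type*} [Fintype V] [DecidableEq V] (G : SimpleGraph V)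
    [DecidableRel G.Adj] (hG : G.Connected) (c : V) (g : V → V → ℝ)
    (hsym : ∀ u v, g u v = g v u)
    (hL : ∀ v w, w ≠ c → (G.degree w : ℝ) * g w v - ∑ u ∈ G.neighborFinset w, g u v =
      if w = v then 1 else 0) :
    degRes G = ∑ v, (G.degree v : ℝ) * (Fintype.card V * g v v - 2 * ∑ u, g u v)
      + (∑ v, (G.degree v : ℝ)) * ∑ v, g v v := by
  have hcol : ∀ v, (G.lapMatrix ℝ).mulVec (fun u => g u v) = Pi.single v 1 - Pi.single c 1 := by
    intro v
    have hne : ∀ w, w ≠ c → (G.lapMatrix ℝ).mulVec (fun u => g u v) w = (Pi.single v 1 : V → ℝ) w := by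
      intro w hw
      rw [SimpleGraph.lapMatrix_mulVec_apply, hL v w hw, Pi.single_apply]
    have hsum : ∑ w, (G.lapMatrix ℝ).mulVec (fun u => g u v) w = 0 := by
      have h1 : (fun _ : V => (1 : ℝ)) ⬝ᵥ (G.lapMatrix ℝ).mulVec (fun u => g u v) = 0 := by
        rw [Matrix.dotProduct_mulVec, ← Matrix.mulVec_transpose,
          (SimpleGraph.isSymm_lapMatrix ℝ G).eq, SimpleGraph.lapMatrix_mulVec_const_eq_zero,
          zero_dotProduct]
      simpa [dotProduct] using h1
    ext w
    by_cases hw : w = c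
    · subst hw
      rw [← Finset.add_sum_erase _ _ (Finset.mem_univ w)] at hsum
      have h2 : ∑ x ∈ univ.erase w, (G.lapMatrix ℝ).mulVec (fun u => g u v) x =
          ∑ x ∈ univ.erase w, (Pi.single v 1 : V → ℝ) x :=
        Finset.sum_congr rfl fun x hx => hne x (Finset.ne_of_mem_erase hx)
      have h3 : (Pi.single v 1 : V → ℝ) w + ∑ x ∈ univ.erase w, (Pi.single v 1 : V → ℝ) x = 1 := by
        rw [Finset.add_sum_erase _ _ (Finset.mem_univ w)]
        simp
      simp only [Pi.sub_apply, Pi.single_eq_same]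
      linarith
    · rw [hne w hw]
      simp [hw]
  have hR : ∀ u v, effRes G u v = g v v + g u u - 2 * g u v := by
    intro u v
    rw [effRes_eq_aux G hG u v ((fun w => g w v) - (fun w => g w u))]
    · simp only [Pi.sub_apply]
      rw [hsym v u]
      ring
    · rw [Matrix.mulVec_sub, hcol, hcol]
      abel
  rw [degRes_eq_aux]
  simp only [hR]
  have e1 : ∑ u, ∑ v, ((G.degree u : ℝ) + (G.degree v : ℝ)) * (g v v + g u u - 2 * g u v) =
      2 * ∑ u, ∑ v, (G.degree u : ℝ) * (g v v + g u u - 2 * g u v) := by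
    simp only [add_mul, Finset.sum_add_distrib]
    rw [two_mul]
    congr 1
    rw [Finset.sum_comm]
    refine Finset.sum_congr rfl fun u _ => Finset.sum_congr rfl fun v _ => ?_
    rw [hsym v u]
    ring
  rw [e1, Finset.sum_mul, ← Finset.sum_add_distrib, ← mul_assoc]
  norm_num
  refine Finset.sum_congr rfl fun u _ => ?_
  rw [← Finset.mul_sum, Finset.sum_sub_distrib, Finset.sum_add_distrib, ← Finset.mul_sum]
  simp only [Finset.sum_const, Finset.card_univ, nsmul_eq_mul, fun v => hsym u v]
  ring

/-! ### Green functions of the two graphs -/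

/-- Two triangle vertices `i`, `j` are mates if they form a triangle with `0`. -/
def matesAux (t i j : ℕ) : Prop :=
  (Odd i ∧ j = i + 1 ∧ j ≤ 2 * t) ∨ (Odd j ∧ i = j + 1 ∧ i ≤ 2 * t)

open Classical in
/-- Green function of `G⁰(n,t)` grounded at `0`. -/
noncomputable def green0Aux (t i j : ℕ) : ℝ :=
  if i = 0 then 0
  else if i = j then (if i ≤ 2 * t then 2 / 3 else 1)
  else if matesAux t i j then 1 / 3 else 0

/-- Green function of `G4` grounded at `0`. -/
noncomputable def green4Aux (t i j : ℕ) : ℝ :=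
  green0Aux t (if i = 2 * t + 1 then 1 else i) (if j = 2 * t + 1 then 1 else j)
    + if i = 2 * t + 1 ∧ j = 2 * t + 1 then 1 else 0

theorem matesAux_comm (t i j : ℕ) : matesAux t i j ↔ matesAux t j i := by
  unfold matesAux
  exact or_comm

theorem green0Aux_comm (t i j : ℕ) : green0Aux t i j = green0Aux t j i := by
  unfold green0Aux
  by_cases h : i = j
  · rw [h]
  · have h' : ¬ j = i := fun e => h e.symm
    simp only [if_neg h, if_neg h', matesAux_comm t j i]
    unfold matesAux
    by_cases hi : i = 0 <;> by_cases hj : j = 0 <;> simp [hi, hj] <;> grind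

theorem green4Aux_comm (t i j : ℕ) : green4Aux t i j = green4Aux t j i := by
  unfold green4Aux
  rw [green0Aux_comm]
  simp only [and_comm]

theorem exists_mate_aux (t i : ℕ) (h0 : i ≠ 0) (hi : i ≤ 2 * t) :
    ∃ m, matesAux t i m ∧ m ≠ 0 ∧ m ≤ 2 * t ∧ m ≠ i := by
  unfold matesAux
  rcases Nat.even_or_odd' i with ⟨k, hk | hk⟩
  · refine ⟨i - 1, Or.inr ⟨⟨k - 1, by omega⟩, by omega, by omega⟩, by omega, by omega, by omega⟩
  · refine ⟨i + 1, Or.inl ⟨⟨k, by omega⟩, by omega, by omega⟩, by omega, by omega, by omega⟩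

theorem mate_unique_aux (t i a b : ℕ) (ha : matesAux t i a) (hb : matesAux t i b) : a = b := by
  unfold matesAux at *
  simp only [Nat.odd_iff] at *
  omega

theorem mate_bound_aux (t i a : ℕ) (ha : matesAux t i a) :
    i ≠ 0 ∧ a ≠ 0 ∧ i ≤ 2 * t ∧ a ≤ 2 * t ∧ a ≠ i := by
  unfold matesAux at *
  simp only [Nat.odd_iff] at *
  omega

theorem G0_adj_aux (n t : ℕ) (a b : Fin n) :
    (G0 n t).Adj a b ↔ a ≠ b ∧ (a.val = 0 ∨ b.val = 0 ∨ matesAux t a b) := by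
  simp only [G0, SimpleGraph.fromRel_adj, matesAux]
  tauto

theorem G4_adj_aux (n t : ℕ) (a b : Fin n) :
    (G4g n t).Adj a b ↔ a ≠ b ∧ ((a.val = 0 ∧ b.val ≠ 2 * t + 1) ∨ (b.val = 0 ∧ a.val ≠ 2 * t + 1)
      ∨ matesAux t a b ∨ (a.val = 1 ∧ b.val = 2 * t + 1) ∨ (b.val = 1 ∧ a.val = 2 * t + 1)) := by
  simp only [G4g, SimpleGraph.fromRel_adj, matesAux]
  tauto

theorem green0_zero_aux (t j : ℕ) : green0Aux t 0 j = 0 := by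
  simp [green0Aux]

theorem green0_pend_aux (t i j : ℕ) (hi : 2 * t < i) :
    green0Aux t i j = if i = j then 1 else 0 := by
  have h1 : ¬ matesAux t i j := fun h => by
    have := mate_bound_aux _ _ _ h
    omega
  have h2 : i ≠ 0 := by omega
  have h3 : ¬ i ≤ 2 * t := by omega
  simp [green0Aux, h1, h2, h3]

theorem green0_tri_aux (t i m j : ℕ) (hm : matesAux t i m) :
    green0Aux t i j = if i = j then 2 / 3 else if m = j then 1 / 3 else 0 := by
  obtain ⟨h1, -, h3, -⟩ := mate_bound_aux _ _ _ hm
  have h4 : matesAux t i j ↔ m = j :=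
    ⟨fun h => mate_unique_aux _ _ _ _ hm h, fun h => h ▸ hm⟩
  simp [green0Aux, h1, h3, h4]

theorem green4_row_aux (t i j : ℕ) (hi : i ≠ 2 * t + 1) :
    green4Aux t i j = green0Aux t i (if j = 2 * t + 1 then 1 else j) := by
  simp [green4Aux, hi]

theorem green4_p_aux (t j : ℕ) :
    green4Aux t (2 * t + 1) j = green0Aux t 1 (if j = 2 * t + 1 then 1 else j)
      + if j = 2 * t + 1 then 1 else 0 := by
  simp [green4Aux]

/-! ### Sums over the vertices -/

theorem sum_three_aux (n t : ℕ) (h1 : 2 * t + 2 ≤ n) (f : Fin n → ℝ) (a b c : ℝ)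
    (h0 : ∀ v : Fin n, v.val = 0 → f v = a)
    (hb : ∀ v : Fin n, v.val ≠ 0 → v.val ≤ 2 * t → f v = b)
    (hc : ∀ v : Fin n, 2 * t < v.val → f v = c) :
    ∑ v, f v = a + 2 * t * b + (n - 1 - 2 * t) * c := by
  obtain ⟨k, rfl⟩ := Nat.exists_eq_add_of_le h1
  have hf : ∀ v, f v = (fun i : ℕ => if i = 0 then a else if i ≤ 2 * t then b else c) v.val := by
    intro v
    by_cases e0 : v.val = 0
    · simp [e0, h0]
    · by_cases e1 : v.val ≤ 2 * t
      · simp [e0, e1, hb]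
      · simp [e0, e1, hc v (by omega)]
  rw [Finset.sum_congr rfl fun v _ => hf v, Fin.sum_univ_eq_sum_range
    (fun i : ℕ => if i = 0 then a else if i ≤ 2 * t then b else c),
    show 2 * t + 2 + k = (2 * t + (k + 1)) + 1 by ring, Finset.sum_range_succ',
    Finset.sum_range_add]
  have s1 : ∑ x ∈ range (2 * t), (if x + 1 = 0 then a else if x + 1 ≤ 2 * t then b else c) =
      ∑ x ∈ range (2 * t), b := by
    refine Finset.sum_congr rfl fun x hx => ?_
    have := Finset.mem_range.mp hx
    rw [if_neg (by omega), if_pos (by omega)]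
  have s2 : ∑ x ∈ range (k + 1), (if 2 * t + x + 1 = 0 then a else
      if 2 * t + x + 1 ≤ 2 * t then b else c) = ∑ x ∈ range (k + 1), c := by
    refine Finset.sum_congr rfl fun x hx => ?_
    rw [if_neg (by omega), if_neg (by omega)]
  rw [s1, s2]
  simp
  ring

theorem sum_six_aux (n t : ℕ) (h1 : 2 * t + 2 ≤ n) (ht : 1 ≤ t) (f : Fin n → ℝ)
    (a b c x y z : ℝ)
    (h0 : ∀ v : Fin n, v.val = 0 → f v = a)
    (hx : ∀ v : Fin n, v.val = 1 → f v = x)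
    (hy : ∀ v : Fin n, v.val = 2 → f v = y)
    (hb : ∀ v : Fin n, 2 < v.val → v.val ≤ 2 * t → f v = b)
    (hz : ∀ v : Fin n, v.val = 2 * t + 1 → f v = z)
    (hc : ∀ v : Fin n, 2 * t + 1 < v.val → f v = c) :
    ∑ v, f v = a + x + y + (2 * t - 2) * b + z + (n - 2 - 2 * t) * c := by
  let v1 : Fin n := ⟨1, by omega⟩
  let v2 : Fin n := ⟨2, by omega⟩
  let vp : Fin n := ⟨2 * t + 1, by omega⟩
  have h := sum_three_aux n t h1 (fun v => f v - (if v = v1 then x - b else 0)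
    - (if v = v2 then y - b else 0) - (if v = vp then z - c else 0)) a b c ?_ ?_ ?_
  · simp only [Finset.sum_sub_distrib, Finset.sum_ite_eq', Finset.mem_univ, if_true] at h
    linarith
  · intro v hv
    simp [v1, v2, vp, Fin.ext_iff, hv, h0 v hv]
  · intro v hv0 hv
    by_cases e1 : v.val = 1
    · simp [v1, v2, vp, Fin.ext_iff, e1, hx v e1]
      omega
    by_cases e2 : v.val = 2
    · simp [v1, v2, vp, Fin.ext_iff, e2, hy v e2]
    have e3 : v.val ≠ 2 * t + 1 := by omega
    simp [v1, v2, vp, Fin.ext_iff, e1, e2, e3, hb v (by omega) hv]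
  · intro v hv
    have e1 : v.val ≠ 1 := by omega
    have e2 : v.val ≠ 2 := by omega
    by_cases e3 : v.val = 2 * t + 1
    · simp [v1, v2, vp, Fin.ext_iff, e3, hz v e3]
      intros; omega
    · simp [v1, v2, vp, Fin.ext_iff, e1, e2, e3, hc v (by omega)]

/-! ### The graph `G⁰(n,t)` -/

theorem G0_connected_aux (n t : ℕ) (h1 : 2 * t + 2 ≤ n) : (G0 n t).Connected := by
  let z : Fin n := ⟨0, by omega⟩
  have hz : ∀ w, (G0 n t).Reachable w z := by
    intro w
    by_cases hw : w = z
    · rw [hw]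
    · refine SimpleGraph.Adj.reachable ?_
      rw [G0_adj_aux]
      exact ⟨hw, Or.inr (Or.inl rfl)⟩
  have : Nonempty (Fin n) := ⟨z⟩
  exact ⟨fun a b => (hz a).trans (hz b).symm⟩

theorem degRes_G0_aux (n t : ℕ) (h1 : 2 * t + 2 ≤ n) :
    degRes (G0 n t) = n * (n - 1 + 2 / 3 * t) - 2 * (n - 1 + 2 * t)
      + 2 * (n - 1 + t) * (n - 1 - 2 / 3 * t) := by
  classical
  let z : Fin n := ⟨0, by omega⟩
  have hN0 : (G0 n t).neighborFinset z = univ.erase z := by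
    ext a
    rw [SimpleGraph.mem_neighborFinset, G0_adj_aux]
    simp [z, eq_comm]
  have hNp : ∀ w : Fin n, 2 * t < w.val → (G0 n t).neighborFinset w = {z} := by
    intro w hw
    ext a
    rw [SimpleGraph.mem_neighborFinset, G0_adj_aux]
    have hm : ¬ matesAux t w a := fun h => by
      have := mate_bound_aux _ _ _ h
      omega
    simp only [hm, or_false, Finset.mem_singleton, Fin.ext_iff, z, ne_eq]
    omega
  have hNt : ∀ w m : Fin n, matesAux t w m → (G0 n t).neighborFinset w = {z, m} := by
    intro w m hwm
    have hb := mate_bound_aux _ _ _ hwm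
    ext a
    rw [SimpleGraph.mem_neighborFinset, G0_adj_aux]
    have hm : matesAux t w a ↔ m.val = a.val :=
      ⟨fun h => mate_unique_aux _ _ _ _ hwm h, fun h => h ▸ hwm⟩
    simp only [hm, Finset.mem_singleton, Finset.mem_insert, Fin.ext_iff, z, ne_eq]
    omega
  have hmate : ∀ w : Fin n, w.val ≠ 0 → w.val ≤ 2 * t → ∃ m : Fin n, matesAux t w m := by
    intro w h0 hw
    obtain ⟨m, hm, -, hm2, -⟩ := exists_mate_aux t w h0 hw
    exact ⟨⟨m, by omega⟩, hm⟩
  have hd0 : ∀ w : Fin n, w.val = 0 → ((G0 n t).degree w : ℝ) = n - 1 := by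
    intro w hw
    have : w = z := Fin.ext hw
    rw [this, ← SimpleGraph.card_neighborFinset_eq_degree, hN0,
      Finset.card_erase_of_mem (Finset.mem_univ _), Finset.card_univ, Fintype.card_fin,
      Nat.cast_sub (by omega)]
    simp
  have hdp : ∀ w : Fin n, 2 * t < w.val → ((G0 n t).degree w : ℝ) = 1 := by
    intro w hw
    rw [← SimpleGraph.card_neighborFinset_eq_degree, hNp w hw]
    simp
  have hzm : ∀ w m : Fin n, matesAux t w m → z ≠ m := by
    intro w m hwm e
    have := mate_bound_aux _ _ _ hwm
    rw [← e] at this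
    simp [z] at this
  have hdt : ∀ w : Fin n, w.val ≠ 0 → w.val ≤ 2 * t → ((G0 n t).degree w : ℝ) = 2 := by
    intro w h0 hw
    obtain ⟨m, hm⟩ := hmate w h0 hw
    rw [← SimpleGraph.card_neighborFinset_eq_degree, hNt w m hm,
      Finset.card_pair (hzm w m hm)]
    simp
  have hs0 : ∀ v : Fin n, v.val = 0 → ∑ u : Fin n, green0Aux t u v = 0 := by
    intro v hv
    refine Finset.sum_eq_zero fun u _ => ?_
    rw [green0Aux_comm, hv, green0_zero_aux]
  have hsp : ∀ v : Fin n, 2 * t < v.val → ∑ u : Fin n, green0Aux t u v = 1 := by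
    intro v hv
    simp only [green0Aux_comm t _ v.val, green0_pend_aux t v.val _ hv, ← Fin.ext_iff]
    simp
  have hst : ∀ v : Fin n, v.val ≠ 0 → v.val ≤ 2 * t → ∑ u : Fin n, green0Aux t u v = 1 := by
    intro v h0 hv
    obtain ⟨m, hm⟩ := hmate v h0 hv
    have hne : m ≠ v := fun e => (mate_bound_aux _ _ _ hm).2.2.2.2 (congrArg Fin.val e)
    have e : ∀ u : Fin n, green0Aux t u v = (if v = u then 2 / 3 else 0)
        + (if m = u then 1 / 3 else 0) := by
      intro u
      rw [green0Aux_comm, green0_tri_aux t v m u hm]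
      simp only [← Fin.ext_iff]
      by_cases e1 : v = u
      · have : m ≠ u := e1 ▸ hne
        simp [e1, this]
      · simp [e1]
    simp only [e, Finset.sum_add_distrib, Finset.sum_ite_eq, Finset.mem_univ, if_true]
    norm_num
  rw [degRes_green_aux (G0 n t) (G0_connected_aux n t h1) z (fun u v => green0Aux t u v)
    (fun u v => green0Aux_comm t u v)]
  · have g0 : ∀ v : Fin n, v.val = 0 → green0Aux t v v = 0 := by
      intro v hv
      rw [hv, green0_zero_aux]
    have gp : ∀ v : Fin n, 2 * t < v.val → green0Aux t v v = 1 := by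
      intro v hv
      rw [green0_pend_aux t _ _ hv, if_pos rfl]
    have gt : ∀ v : Fin n, v.val ≠ 0 → v.val ≤ 2 * t → green0Aux t v v = 2 / 3 := by
      intro v h0 hv
      simp [green0Aux, h0, hv]
    rw [sum_three_aux n t h1 (fun v => ((G0 n t).degree v : ℝ) *
        (Fintype.card (Fin n) * green0Aux t v v - 2 * ∑ u : Fin n, green0Aux t u v))
        0 (2 * (n * (2 / 3) - 2)) (n - 2) ?_ ?_ ?_,
      sum_three_aux n t h1 (fun v => ((G0 n t).degree v : ℝ)) (n - 1) 2 1 hd0 hdt hdp,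
      sum_three_aux n t h1 (fun v => green0Aux t v v) 0 (2 / 3) 1 g0 gt gp]
    · ring
    · intro v hv
      simp only [g0 v hv, hs0 v hv]
      ring
    · intro v h0 hv
      simp only [gt v h0 hv, hst v h0 hv, hdt v h0 hv, Fintype.card_fin]
      ring
    · intro v hv
      simp only [gp v hv, hsp v hv, hdp v hv, Fintype.card_fin]
      ring
  · intro v w hw
    have hw0 : w.val ≠ 0 := fun e => hw (Fin.ext e)
    by_cases hwt : w.val ≤ 2 * t
    · obtain ⟨m, hm⟩ := hmate w hw0 hwt
      have hb := mate_bound_aux _ _ _ hm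
      rw [hdt w hw0 hwt, hNt w m hm, Finset.sum_pair (hzm w m hm),
        show (z : ℕ) = 0 from rfl, green0_zero_aux, green0_tri_aux t w m v hm,
        green0_tri_aux t m w v ((matesAux_comm _ _ _).mp hm)]
      simp only [Fin.ext_iff]
      split_ifs <;> first | omega | norm_num
    · rw [hdp w (by omega), hNp w (by omega), Finset.sum_singleton,
        show (z : ℕ) = 0 from rfl, green0_zero_aux, green0_pend_aux t w v (by omega)]
      simp [Fin.ext_iff]

/-! ### The graph `G4` -/

theorem mates_one_two_aux (t : ℕ) (ht : 1 ≤ t) : matesAux t 1 2 := by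
  refine Or.inl ⟨odd_one, rfl, by omega⟩

theorem G4_connected_aux (n t : ℕ) (h1 : 2 * t + 2 ≤ n) (ht : 1 ≤ t) : (G4g n t).Connected := by
  let z : Fin n := ⟨0, by omega⟩
  let o : Fin n := ⟨1, by omega⟩
  have hz1 : ∀ w : Fin n, w.val ≠ 2 * t + 1 → (G4g n t).Reachable w z := by
    intro w hp
    by_cases hw : w = z
    · rw [hw]
    · refine SimpleGraph.Adj.reachable ?_
      rw [G4_adj_aux]
      exact ⟨hw, Or.inr (Or.inl ⟨rfl, hp⟩)⟩
  have hz : ∀ w, (G4g n t).Reachable w z := by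
    intro w
    by_cases hp : w.val = 2 * t + 1
    · refine SimpleGraph.Reachable.trans (SimpleGraph.Adj.reachable (v := o) ?_)
        (hz1 o (by simp [o]; omega))
      rw [G4_adj_aux]
      refine ⟨?_, Or.inr (Or.inr (Or.inr (Or.inr ⟨rfl, hp⟩)))⟩
      intro e
      rw [e] at hp
      simp [o] at hp
      omega
    · exact hz1 w hp
  have : Nonempty (Fin n) := ⟨z⟩
  exact ⟨fun a b => (hz a).trans (hz b).symm⟩

theorem degRes_G4_aux (n t : ℕ) (h1 : 2 * t + 2 ≤ n) (ht : 1 ≤ t) :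
    degRes (G4g n t) = n * (n - 1 + 2 / 3 * t + 4 / 3) - 2 * (n - 1 + 2 * t + 16 / 3)
      + 2 * (n - 1 + t) * (n - 1 - 2 / 3 * t + 2 / 3) := by
  classical
  let z : Fin n := ⟨0, by omega⟩
  let o : Fin n := ⟨1, by omega⟩
  let w2 : Fin n := ⟨2, by omega⟩
  let p : Fin n := ⟨2 * t + 1, by omega⟩
  have hzv : (z : ℕ) = 0 := rfl
  have hov : (o : ℕ) = 1 := rfl
  have h2v : (w2 : ℕ) = 2 := rfl
  have hpv : (p : ℕ) = 2 * t + 1 := rfl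
  have h12 := mates_one_two_aux t ht
  have h21 := (matesAux_comm _ _ _).mp h12
  have hN0 : (G4g n t).neighborFinset z = (univ.erase z).erase p := by
    ext a
    rw [SimpleGraph.mem_neighborFinset, G4_adj_aux]
    have hm : ¬ matesAux t 0 a := fun h => (mate_bound_aux _ _ _ h).1 rfl
    simp only [hm, not_true_eq_false, false_or, or_false, true_and, and_true, false_and, and_false,
      Finset.mem_erase, Finset.mem_univ, Fin.ext_iff, hzv, hpv, ne_eq]
    omega
  have hNpend : ∀ w : Fin n, 2 * t + 1 < w.val → (G4g n t).neighborFinset w = {z} := by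
    intro w hw
    ext a
    rw [SimpleGraph.mem_neighborFinset, G4_adj_aux]
    have hm : ¬ matesAux t w a := fun h => by
      have := mate_bound_aux _ _ _ h
      omega
    simp only [hm, not_true_eq_false, false_or, or_false, true_and, and_true, false_and, and_false,
      Finset.mem_singleton, Fin.ext_iff, hzv, ne_eq]
    omega
  have hNp : (G4g n t).neighborFinset p = {o} := by
    ext a
    rw [SimpleGraph.mem_neighborFinset, G4_adj_aux]
    have hm : ¬ matesAux t (2 * t + 1) a := fun h => by
      have := mate_bound_aux _ _ _ h
      omega
    simp only [hm, not_true_eq_false, false_or, or_false, true_and, and_true, false_and, and_false,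
      Finset.mem_singleton, Fin.ext_iff, hov, hpv, ne_eq]
    omega
  have hN1 : (G4g n t).neighborFinset o = {z, w2, p} := by
    ext a
    rw [SimpleGraph.mem_neighborFinset, G4_adj_aux]
    have hm : matesAux t 1 a ↔ 2 = a.val :=
      ⟨fun h => mate_unique_aux _ _ _ _ h12 h, fun h => h ▸ h12⟩
    simp only [hm, not_true_eq_false, false_or, or_false, true_and, and_true, false_and, and_false,
      Finset.mem_singleton, Finset.mem_insert, Fin.ext_iff, hov, hpv, hzv, h2v, ne_eq]
    omega
  have hNt : ∀ w m : Fin n, w.val ≠ 1 → matesAux t w m →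
      (G4g n t).neighborFinset w = {z, m} := by
    intro w m hw1 hwm
    have hb := mate_bound_aux _ _ _ hwm
    ext a
    rw [SimpleGraph.mem_neighborFinset, G4_adj_aux]
    have hm : matesAux t w a ↔ m.val = a.val :=
      ⟨fun h => mate_unique_aux _ _ _ _ hwm h, fun h => h ▸ hwm⟩
    simp only [hm, not_true_eq_false, false_or, or_false, true_and, and_true, false_and, and_false,
      Finset.mem_singleton, Finset.mem_insert, Fin.ext_iff, hzv, ne_eq]
    omega
  have hmate : ∀ w : Fin n, w.val ≠ 0 → w.val ≤ 2 * t → ∃ m : Fin n, matesAux t w m := by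
    intro w h0 hw
    obtain ⟨m, hm, -, hm2, -⟩ := exists_mate_aux t w h0 hw
    exact ⟨⟨m, by omega⟩, hm⟩
  have hzm : ∀ w m : Fin n, matesAux t w m → z ≠ m := by
    intro w m hwm e
    have := mate_bound_aux _ _ _ hwm
    rw [← e] at this
    simp [z] at this
  have hz2 : z ∉ ({w2, p} : Finset (Fin n)) := by
    simp only [Finset.mem_insert, Finset.mem_singleton, Fin.ext_iff, hzv, h2v, hpv]
    omega
  have h2p : w2 ≠ p := by
    simp only [ne_eq, Fin.ext_iff, h2v, hpv]
    omega
  -- degrees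
  have hd0 : ∀ w : Fin n, w.val = 0 → ((G4g n t).degree w : ℝ) = n - 2 := by
    intro w hw
    have : w = z := Fin.ext hw
    have hpz : p ∈ univ.erase z := by
      simp [Fin.ext_iff, hpv, hzv]
    rw [this, ← SimpleGraph.card_neighborFinset_eq_degree, hN0,
      Finset.card_erase_of_mem hpz,
      Finset.card_erase_of_mem (Finset.mem_univ _), Finset.card_univ, Fintype.card_fin,
      Nat.sub_sub, Nat.cast_sub (by omega)]
    norm_num
  have hd1 : ∀ w : Fin n, w.val = 1 → ((G4g n t).degree w : ℝ) = 3 := by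
    intro w hw
    have : w = o := Fin.ext hw
    rw [this, ← SimpleGraph.card_neighborFinset_eq_degree, hN1,
      Finset.card_insert_of_notMem hz2, Finset.card_pair h2p]
    norm_num
  have hdp : ∀ w : Fin n, w.val = 2 * t + 1 → ((G4g n t).degree w : ℝ) = 1 := by
    intro w hw
    have : w = p := Fin.ext hw
    rw [this, ← SimpleGraph.card_neighborFinset_eq_degree, hNp]
    simp
  have hdpend : ∀ w : Fin n, 2 * t + 1 < w.val → ((G4g n t).degree w : ℝ) = 1 := by
    intro w hw
    rw [← SimpleGraph.card_neighborFinset_eq_degree, hNpend w hw]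
    simp
  have hdt : ∀ w : Fin n, 1 < w.val → w.val ≤ 2 * t → ((G4g n t).degree w : ℝ) = 2 := by
    intro w h0 hw
    obtain ⟨m, hm⟩ := hmate w (by omega) hw
    rw [← SimpleGraph.card_neighborFinset_eq_degree, hNt w m (by omega) hm,
      Finset.card_pair (hzm w m hm)]
    simp
  have hd2 : ∀ w : Fin n, w.val = 2 → ((G4g n t).degree w : ℝ) = 2 :=
    fun w hw => hdt w (by omega) (by omega)
  -- column sums of the Green function
  have three : ∀ (a b c : ℝ) (f : Fin n → ℝ), (∀ u : Fin n, f u = (if o = u then a else 0)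
      + (if w2 = u then b else 0) + (if p = u then c else 0)) → ∑ u, f u = a + b + c := by
    intro a b c f hf
    simp only [hf, Finset.sum_add_distrib, Finset.sum_ite_eq, Finset.mem_univ, if_true]
  have hs1 : ∀ v : Fin n, v.val = 1 → ∑ u : Fin n, green4Aux t u v = 5 / 3 := by
    intro v hv
    rw [three (2 / 3) (1 / 3) (2 / 3)]
    · norm_num
    · intro u
      rw [green4Aux_comm, hv, green4_row_aux t 1 _ (by omega), green0_tri_aux t 1 2 _ h12]
      simp only [Fin.ext_iff, hov, h2v, hpv]
      split_ifs <;> first | omega | norm_num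
  have hs2 : ∀ v : Fin n, v.val = 2 → ∑ u : Fin n, green4Aux t u v = 4 / 3 := by
    intro v hv
    rw [three (1 / 3) (2 / 3) (1 / 3)]
    · norm_num
    · intro u
      rw [green4Aux_comm, hv, green4_row_aux t 2 _ (by omega), green0_tri_aux t 2 1 _ h21]
      simp only [Fin.ext_iff, hov, h2v, hpv]
      split_ifs <;> first | omega | norm_num
  have hsp : ∀ v : Fin n, v.val = 2 * t + 1 → ∑ u : Fin n, green4Aux t u v = 8 / 3 := by
    intro v hv
    rw [three (2 / 3) (1 / 3) (5 / 3)]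
    · norm_num
    · intro u
      rw [green4Aux_comm, hv, green4_p_aux t, green0_tri_aux t 1 2 _ h12]
      simp only [Fin.ext_iff, hov, h2v, hpv]
      split_ifs <;> first | omega | norm_num
  have hspend : ∀ v : Fin n, 2 * t + 1 < v.val → ∑ u : Fin n, green4Aux t u v = 1 := by
    intro v hv
    have e : ∀ u : Fin n, green4Aux t u v = if v = u then 1 else 0 := by
      intro u
      rw [green4Aux_comm, green4_row_aux t v _ (by omega), green0_pend_aux t v _ (by omega)]
      simp only [Fin.ext_iff]
      split_ifs <;> first | omega | norm_num
    simp [e]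
  have hst : ∀ v : Fin n, 2 < v.val → v.val ≤ 2 * t → ∑ u : Fin n, green4Aux t u v = 1 := by
    intro v h0 hv
    obtain ⟨m, hm⟩ := hmate v (by omega) hv
    have hb := mate_bound_aux _ _ _ hm
    have hm1 : m.val ≠ 1 := by
      intro e
      have := mate_unique_aux t 1 _ _ h12 ((matesAux_comm _ _ _).mp (e ▸ hm))
      omega
    have e : ∀ u : Fin n, green4Aux t u v = (if v = u then 2 / 3 else 0)
        + (if m = u then 1 / 3 else 0) := by
      intro u
      rw [green4Aux_comm, green4_row_aux t v _ (by omega), green0_tri_aux t v m _ hm]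
      simp only [Fin.ext_iff]
      split_ifs <;> first | omega | norm_num
    simp only [e, Finset.sum_add_distrib, Finset.sum_ite_eq, Finset.mem_univ, if_true]
    norm_num
  rw [degRes_green_aux (G4g n t) (G4_connected_aux n t h1 ht) z (fun u v => green4Aux t u v)
    (fun u v => green4Aux_comm t u v)]
  · have g0 : ∀ v : Fin n, v.val = 0 → green4Aux t v v = 0 := by
      intro v hv
      rw [hv, green4_row_aux t 0 _ (by omega), green0_zero_aux]
    have gpend : ∀ v : Fin n, 2 * t + 1 < v.val → green4Aux t v v = 1 := by
      intro v hv
      rw [green4_row_aux t _ _ (by omega), green0_pend_aux t _ _ (by omega), if_pos]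
      rw [if_neg (by omega)]
    have gp : ∀ v : Fin n, v.val = 2 * t + 1 → green4Aux t v v = 5 / 3 := by
      intro v hv
      rw [hv, green4_p_aux, green0_tri_aux t 1 2 _ h12]
      norm_num
    have gt : ∀ v : Fin n, v.val ≠ 0 → v.val ≤ 2 * t → green4Aux t v v = 2 / 3 := by
      intro v h0 hv
      have h : v.val ≠ 2 * t + 1 := by omega
      simp [green4Aux, green0Aux, h0, hv, h]
    rw [sum_six_aux n t h1 ht (fun v => ((G4g n t).degree v : ℝ) *
        (Fintype.card (Fin n) * green4Aux t v v - 2 * ∑ u : Fin n, green4Aux t u v))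
        ((n - 2) * (n * 0 - 2 * 0)) (2 * (n * (2 / 3) - 2 * 1)) (1 * (n * 1 - 2 * 1))
        (3 * (n * (2 / 3) - 2 * (5 / 3))) (2 * (n * (2 / 3) - 2 * (4 / 3)))
        (1 * (n * (5 / 3) - 2 * (8 / 3))) ?_ ?_ ?_ ?_ ?_ ?_,
      sum_six_aux n t h1 ht (fun v => ((G4g n t).degree v : ℝ)) (n - 2) 2 1 3 2 1 hd0 hd1 hd2
        (fun v a b => hdt v (by omega) b) hdp hdpend,
      sum_six_aux n t h1 ht (fun v => green4Aux t v v) 0 (2 / 3) 1 (2 / 3) (2 / 3) (5 / 3) g0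
        (fun v a => gt v (by omega) (by omega)) (fun v a => gt v (by omega) (by omega))
        (fun v a b => gt v (by omega) b) gp gpend]
    · ring
    · intro v hv
      have hs0 : ∑ u : Fin n, green4Aux t u v = 0 := by
        refine Finset.sum_eq_zero fun u _ => ?_
        rw [green4Aux_comm, hv, green4_row_aux t 0 _ (by omega), green0_zero_aux]
      simp only [g0 v hv, hs0, hd0 v hv, Fintype.card_fin]
    · intro v hv
      simp only [gt v (by omega) (by omega), hs1 v hv, hd1 v hv, Fintype.card_fin]
    · intro v hv
      simp only [gt v (by omega) (by omega), hs2 v hv, hd2 v hv, Fintype.card_fin]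
    · intro v hv hv'
      simp only [gt v (by omega) (by omega), hst v hv hv', hdt v (by omega) hv', Fintype.card_fin]
    · intro v hv
      simp only [gp v hv, hsp v hv, hdp v hv, Fintype.card_fin]
    · intro v hv
      simp only [gpend v hv, hspend v hv, hdpend v hv, Fintype.card_fin]
  · intro v w hw
    have hw0 : w.val ≠ 0 := fun e => hw (Fin.ext e)
    by_cases hw1 : w.val = 1
    · have : w = o := Fin.ext hw1
      rw [hd1 w hw1, this, hN1, Finset.sum_insert hz2, Finset.sum_pair h2p, hzv, hov, h2v, hpv,
        green4_p_aux, green4_row_aux t 0 _ (by omega), green4_row_aux t 1 _ (by omega),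
        green4_row_aux t 2 _ (by omega), green0_zero_aux, green0_tri_aux t 1 2 _ h12,
        green0_tri_aux t 2 1 _ h21]
      simp only [Fin.ext_iff, hov]
      split_ifs <;> first | omega | norm_num
    by_cases hwt : w.val ≤ 2 * t
    · obtain ⟨m, hm⟩ := hmate w hw0 hwt
      have hb := mate_bound_aux _ _ _ hm
      have hm1 : m.val = 1 → w.val = 2 := by
        intro e
        exact (mate_unique_aux t 1 _ _ h12 ((matesAux_comm _ _ _).mp (e ▸ hm))).symm
      rw [hdt w (by omega) hwt, hNt w m hw1 hm, Finset.sum_pair (hzm w m hm), hzv,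
        green4_row_aux t 0 _ (by omega), green4_row_aux t w _ (by omega),
        green4_row_aux t m _ (by omega), green0_zero_aux, green0_tri_aux t w m _ hm,
        green0_tri_aux t m w _ ((matesAux_comm _ _ _).mp hm)]
      simp only [Fin.ext_iff]
      split_ifs <;> first | omega | norm_num
    by_cases hwp : w.val = 2 * t + 1
    · have : w = p := Fin.ext hwp
      rw [hdp w hwp, this, hNp, Finset.sum_singleton, hov, hpv, green4_p_aux,
        green4_row_aux t 1 _ (by omega)]
      simp only [Fin.ext_iff, hpv]
      split_ifs <;> first | omega | ring
    · rw [hdpend w (by omega), hNpend w (by omega), Finset.sum_singleton, hzv,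
        green4_row_aux t 0 _ (by omega), green4_row_aux t w _ (by omega),
        green0_zero_aux, green0_pend_aux t w _ (by omega)]
      simp only [Fin.ext_iff]
      split_ifs <;> first | omega | norm_num

/-- `D_R(G4) - D_R(G⁰(n,t)) = (8/3)n + (4/3)t - 12`. -/
theorem stmt_9 (n t : ℕ) (h1 : 2 * t + 2 ≤ n) (ht : 1 ≤ t) :
    degRes (G4g n t) - degRes (G0 n t) = (8 / 3) * (n : ℝ) + (4 / 3) * t - 12 := by
  rw [degRes_G4_aux n t h1 ht, degRes_G0_aux n t h1]
  ring
end

section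
/- For integers n and t with n ≥ 2t + 2 and t ≥ 1, D_R(G5) − D_R(G⁰(n,t)) = (5/3)n + (1/3)t − 31/3, where G5 is the cactus on n vertices consisting of t − 1 triangles, one quadrilateral C4, and n − 2t − 2 pendent edges, all sharing a single common vertex v1. -/
open Finset

section Aux

theorem effRes_inst {V : Type*} [Fintype V] [DecidableEq V] (G : SimpleGraph V)
    [DecidableRel G.Adj] (u v : V) :
    effRes G u v = if u = v then 0 else
      Matrix.det ((G.lapMatrix ℝ).submatrix
        (fun w : {w : V // w ≠ u ∧ w ≠ v} => (w : V)) (fun w => (w : V)))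
      / Matrix.det ((G.lapMatrix ℝ).submatrix
        (fun w : {w : V // w ≠ u} => (w : V)) (fun w => (w : V))) := by
  unfold effRes
  congr!

theorem degRes_inst {V : Type*} [Fintype V] (G : SimpleGraph V)
    [DecidableRel G.Adj] :
    degRes G = (1 / 2) * ∑ u : V, ∑ v : V,
      ((G.degree u : ℝ) + (G.degree v : ℝ)) * effRes G u v := by
  unfold degRes
  congr!

/-- principal minor from an inverse -/
theorem minor_ratio {W : Type*} [Fintype W] [DecidableEq W] (M N : Matrix W W ℝ)
    (h : M * N = 1) (v : W) :
    (M.submatrix (fun w : {w : W // w ≠ v} => (w : W)) (fun w : {w : W // w ≠ v} => (w : W))).det / M.det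
      = N v v := by
  have hdet : M.det * N.det = 1 := by rw [← Matrix.det_mul, h, Matrix.det_one]
  have hM : M.det ≠ 0 := left_ne_zero_of_mul_eq_one hdet
  have hN : N = M⁻¹ := (Matrix.inv_eq_right_inv h).symm
  have hadj : M.adjugate v v
      = (M.submatrix (fun w : {w : W // w ≠ v} => (w : W)) (fun w : {w : W // w ≠ v} => (w : W))).det := by
    rw [Matrix.adjugate_apply]
    rw [Matrix.twoBlockTriangular_det (M.updateRow v (Pi.single v 1)) (fun w => w ≠ v)]
    · have h1 : (Matrix.toSquareBlockProp (M.updateRow v (Pi.single v 1))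
          (fun w => ¬ w ≠ v)).det = 1 := by
        have : (Matrix.toSquareBlockProp (M.updateRow v (Pi.single v 1))
          (fun w => ¬ w ≠ v)) = 1 := by
          ext ⟨i, hi⟩ ⟨j, hj⟩
          have hi' : i = v := not_not.mp hi
          have hj' : j = v := not_not.mp hj
          subst hi'
          subst hj'
          simp [Matrix.toSquareBlockProp]
        rw [this, Matrix.det_one]
      rw [h1, mul_one]
      congr 1
      ext ⟨i, hi⟩ ⟨j, hj⟩
      simp [Matrix.toSquareBlockProp, Matrix.updateRow_ne hi]
    · intro i hi j hj
      have hi' : i = v := not_not.mp hi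
      subst hi'
      simp [hj]
  rw [← hadj, hN, Matrix.inv_def]
  simp [div_eq_inv_mul]

/-- effective resistance from a grounded Green function -/
theorem effRes_green {V : Type*} [Fintype V] [DecidableEq V] (G : SimpleGraph V)
    [DecidableRel G.Adj] (o : V) (Γ : V → V → ℝ)
    (hΓ : ∀ v w, w ≠ o → (G.degree w : ℝ) * Γ w v - ∑ x ∈ G.neighborFinset w, Γ x v
      = if w = v then 1 else 0) (u v : V) :
    effRes G u v = Γ u u + Γ v v - Γ u v - Γ v u := by
  rw [effRes_inst]
  split_ifs with huv
  · subst huv; ring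
  have hL : ∀ (f : V → ℝ) w, ∑ x, G.lapMatrix ℝ w x * f x
      = (G.degree w : ℝ) * f w - ∑ x ∈ G.neighborFinset w, f x := by
    intro f w
    have := G.lapMatrix_mulVec_apply (R := ℝ) w f
    simpa [Matrix.mulVec, dotProduct] using this
  have hcol : ∀ x, ∑ w, G.lapMatrix ℝ w x = 0 := by
    intro x
    have h1 := congrFun (G.lapMatrix_mulVec_const_eq_zero (R := ℝ)) x
    have h2 := G.isSymm_lapMatrix (R := ℝ)
    simp only [Matrix.mulVec, dotProduct, mul_one, Pi.zero_apply] at h1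
    rw [← h1]
    exact Finset.sum_congr rfl fun w _ => h2.apply x w
  have hrow : ∀ w, ∑ x, G.lapMatrix ℝ w x = 0 := by
    intro x
    have h1 := congrFun (G.lapMatrix_mulVec_const_eq_zero (R := ℝ)) x
    simpa only [Matrix.mulVec, dotProduct, mul_one, Pi.zero_apply] using h1
  have hsum : ∀ f : V → ℝ, ∑ w, ∑ x, G.lapMatrix ℝ w x * f x = 0 := by
    intro f
    rw [Finset.sum_comm]
    simp [← Finset.sum_mul, hcol]
  have hG : ∀ v w, ∑ x, G.lapMatrix ℝ w x * Γ x v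
      = (if w = v then 1 else 0) - (if w = o then 1 else 0) := by
    intro v w
    by_cases hw : w = o
    · subst hw
      have h := hsum (fun x => Γ x v)
      rw [← Finset.add_sum_erase _ _ (Finset.mem_univ w)] at h
      have h2 : ∑ w' ∈ univ.erase w, ∑ x, G.lapMatrix ℝ w' x * Γ x v
          = ∑ w' ∈ univ.erase w, if w' = v then (1:ℝ) else 0 := by
        refine Finset.sum_congr rfl fun w' hw' => ?_
        rw [hL (fun x => Γ x v), hΓ v w' (Finset.ne_of_mem_erase hw')]
      rw [h2, Finset.sum_ite_eq'] at h
      simp only [Finset.mem_erase, Finset.mem_univ, and_true] at h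
      by_cases hv : v = w
      · simp [hv] at h ⊢; exact h
      · rw [if_pos hv] at h
        rw [if_neg (Ne.symm hv), if_pos rfl]
        linarith
    · rw [hL (fun x => Γ x v), hΓ v w hw, if_neg hw, sub_zero]
  set M : Matrix {w : V // w ≠ u} {w : V // w ≠ u} ℝ := (G.lapMatrix ℝ).submatrix
        (fun w : {w : V // w ≠ u} => (w : V)) (fun w => (w : V)) with hM
  let N : Matrix {w : V // w ≠ u} {w : V // w ≠ u} ℝ :=
    fun x y => Γ x y - Γ x u - (Γ u y - Γ u u)
  have hMN : M * N = 1 := by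
    ext ⟨w, hw⟩ ⟨y, hy⟩
    have e : (M * N) ⟨w, hw⟩ ⟨y, hy⟩
        = ∑ x, G.lapMatrix ℝ w x * (Γ x y - Γ x u - (Γ u y - Γ u u)) := by
      rw [Matrix.mul_apply]
      rw [← Finset.add_sum_erase _ _ (Finset.mem_univ u)]
      simp only [sub_self, mul_zero, zero_add]
      symm
      rw [Finset.sum_subtype (p := fun w => w ≠ u) (univ.erase u) (by simp)]
      rfl
    rw [e]
    simp only [mul_sub, Finset.sum_sub_distrib, hG, ← Finset.sum_mul, hrow]
    simp [Matrix.one_apply, hw]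
  have key := minor_ratio M N hMN ⟨v, Ne.symm huv⟩
  have hre : (M.submatrix (fun w : {w : {w : V // w ≠ u} // w ≠ ⟨v, Ne.symm huv⟩} =>
      (w : {w : V // w ≠ u}))
      (fun w : {w : {w : V // w ≠ u} // w ≠ ⟨v, Ne.symm huv⟩} => (w : {w : V // w ≠ u}))).det
      = Matrix.det ((G.lapMatrix ℝ).submatrix
        (fun w : {w : V // w ≠ u ∧ w ≠ v} => (w : V)) (fun w => (w : V))) := by
    let e : {w : {w : V // w ≠ u} // w ≠ ⟨v, Ne.symm huv⟩} ≃ {w : V // w ≠ u ∧ w ≠ v} :=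
      { toFun := fun w => ⟨w.1.1, w.1.2, fun h => w.2 (Subtype.ext h)⟩
        invFun := fun w => ⟨⟨w.1, w.2.1⟩, fun h => w.2.2 (congrArg Subtype.val h)⟩
        left_inv := fun _ => rfl
        right_inv := fun _ => rfl }
    rw [← Matrix.det_submatrix_equiv_self e]
    rfl
  rw [hre] at key
  rw [key]
  simp only [N]
  ring

theorem degRes_green {V : Type*} [Fintype V] [DecidableEq V] (G : SimpleGraph V)
    [DecidableRel G.Adj] (o : V) (Γ : V → V → ℝ) (hs : ∀ u v, Γ u v = Γ v u)
    (hΓ : ∀ v w, w ≠ o → (G.degree w : ℝ) * Γ w v - ∑ x ∈ G.neighborFinset w, Γ x v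
      = if w = v then 1 else 0) :
    degRes G = (Fintype.card V : ℝ) * ∑ u, (G.degree u : ℝ) * Γ u u
      + (∑ u, (G.degree u : ℝ)) * ∑ u, Γ u u
      - 2 * ∑ u, (G.degree u : ℝ) * ∑ v, Γ u v := by
  rw [degRes_inst]
  have e : ∀ u v, ((G.degree u : ℝ) + (G.degree v : ℝ)) * effRes G u v
     = ((G.degree u : ℝ) * Γ u u + (G.degree u : ℝ) * Γ v v - 2 * ((G.degree u : ℝ) * Γ u v))
      + ((G.degree v : ℝ) * Γ v v + (G.degree v : ℝ) * Γ u u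
        - 2 * ((G.degree v : ℝ) * Γ v u)) := by
    intro u v
    rw [effRes_green G o Γ hΓ, hs v u]
    ring
  simp only [e, Finset.sum_add_distrib (f := fun v => _ - _)]
  have e2 : ∑ u, ∑ v, ((G.degree v : ℝ) * Γ v v + (G.degree v : ℝ) * Γ u u
        - 2 * ((G.degree v : ℝ) * Γ v u)) = 
     ∑ u, ∑ v, ((G.degree u : ℝ) * Γ u u + (G.degree u : ℝ) * Γ v v
        - 2 * ((G.degree u : ℝ) * Γ u v)) := Finset.sum_comm
  rw [Finset.sum_add_distrib, e2]
  simp only [Finset.sum_sub_distrib, Finset.sum_add_distrib,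
    Finset.sum_const, Finset.card_univ, nsmul_eq_mul]
  simp only [← Finset.mul_sum, ← Finset.sum_mul]
  ring

end Aux

section Graphs

/-- Green function of `G0` grounded at `0`. -/
noncomputable def gam0 (t a b : ℕ) : ℝ :=
  if a = 0 then 0
  else if 2 * t < a then (if b = a then 1 else 0)
  else if b = a then 2 / 3
  else if (b + 1) / 2 = (a + 1) / 2 then 1 / 3 else 0

/-- Green function of `G5` (with `t = s + 1`) grounded at `0`. -/
noncomputable def gam5 (s a b : ℕ) : ℝ :=
  if a = 0 then 0
  else if 2 * s + 3 < a then (if b = a then 1 else 0)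
  else if a ≤ 2 * s then
    (if b = a then 2 / 3 else if (b + 1) / 2 = (a + 1) / 2 then 1 / 3 else 0)
  else if a = 2 * s + 1 then
    (if b = 2 * s + 1 then 3 / 4 else if b = 2 * s + 2 then 1 / 2
      else if b = 2 * s + 3 then 1 / 4 else 0)
  else if a = 2 * s + 2 then
    (if b = 2 * s + 1 then 1 / 2 else if b = 2 * s + 2 then 1
      else if b = 2 * s + 3 then 1 / 2 else 0)
  else
    (if b = 2 * s + 1 then 1 / 4 else if b = 2 * s + 2 then 1 / 2
      else if b = 2 * s + 3 then 3 / 4 else 0)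

theorem gam0_zero (t b : ℕ) : gam0 t 0 b = 0 := by simp [gam0]

theorem gam0_pend (t a b : ℕ) (h : 2 * t < a) : gam0 t a b = if b = a then 1 else 0 := by
  rw [gam0, if_neg (by omega), if_pos h]

theorem gam0_tri (t a b : ℕ) (h0 : a ≠ 0) (h : a ≤ 2 * t) : gam0 t a b =
    if b = a then 2 / 3 else if (b + 1) / 2 = (a + 1) / 2 then 1 / 3 else 0 := by
  rw [gam0, if_neg h0, if_neg (by omega)]

theorem gam5_zero (t b : ℕ) : gam5 t 0 b = 0 := by simp [gam5]

theorem gam5_pend (t a b : ℕ) (h : 2 * t + 3 < a) :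
    gam5 t a b = if b = a then 1 else 0 := by
  rw [gam5, if_neg (by omega), if_pos h]

theorem gam5_tri (t a b : ℕ) (h0 : a ≠ 0) (h : a ≤ 2 * t) : gam5 t a b =
    if b = a then 2 / 3 else if (b + 1) / 2 = (a + 1) / 2 then 1 / 3 else 0 := by
  rw [gam5, if_neg h0, if_neg (by omega), if_pos h]

theorem gam5_q1 (s b : ℕ) : gam5 s (2 * s + 1) b =
    if b = 2 * s + 1 then 3 / 4 else if b = 2 * s + 2 then 1 / 2
      else if b = 2 * s + 3 then 1 / 4 else 0 := by
  rw [gam5, if_neg (by omega), if_neg (by omega), if_neg (by omega), if_pos rfl]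

theorem gam5_q2 (s b : ℕ) : gam5 s (2 * s + 2) b =
    if b = 2 * s + 1 then 1 / 2 else if b = 2 * s + 2 then 1
      else if b = 2 * s + 3 then 1 / 2 else 0 := by
  rw [gam5, if_neg (by omega), if_neg (by omega), if_neg (by omega), if_neg (by omega),
    if_pos rfl]

theorem gam5_q3 (s b : ℕ) : gam5 s (2 * s + 3) b =
    if b = 2 * s + 1 then 1 / 4 else if b = 2 * s + 2 then 1 / 2
      else if b = 2 * s + 3 then 3 / 4 else 0 := by
  rw [gam5, if_neg (by omega), if_neg (by omega), if_neg (by omega), if_neg (by omega),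
    if_neg (by omega)]

theorem gam0_symm (t a b : ℕ) : gam0 t a b = gam0 t b a := by
  unfold gam0
  split_ifs <;> first | rfl | (exfalso; omega)

theorem cases5 (s a : ℕ) : a = 0 ∨ 2 * s + 3 < a ∨ (a ≠ 0 ∧ a ≤ 2 * s) ∨ a = 2 * s + 1 ∨
    a = 2 * s + 2 ∨ a = 2 * s + 3 := by omega

set_option maxHeartbeats 2000000 in
theorem gam5_symm (s a b : ℕ) : gam5 s a b = gam5 s b a := by
  rcases cases5 s a with rfl | h | ⟨h0, h⟩ | rfl | rfl | rfl <;>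
  rcases cases5 s b with rfl | h' | ⟨h0', h'⟩ | rfl | rfl | rfl <;>
  (try simp only [gam5_zero, gam5_q1, gam5_q2, gam5_q3]) <;>
  (try rw [gam5_pend s a _ h]) <;> (try rw [gam5_tri s a _ h0 h]) <;>
  (try rw [gam5_pend s b _ h']) <;> (try rw [gam5_tri s b _ h0' h']) <;>
  split_ifs <;> first | rfl | (exfalso; omega)

theorem sum_nb {n : ℕ} (G : SimpleGraph (Fin n)) [DecidableRel G.Adj] (w : Fin n)
    (S : Finset ℕ) (hS : ∀ x ∈ S, x < n) (h : ∀ x : Fin n, G.Adj w x ↔ x.val ∈ S)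
    (F : ℕ → ℝ) : ∑ x ∈ G.neighborFinset w, F x = ∑ x ∈ S, F x := by
  refine Finset.sum_bij (fun x _ => x.val) ?_ ?_ ?_ ?_
  · intro a ha
    exact (h a).1 (by simpa using ha)
  · intro a _ b _ hab
    exact Fin.ext hab
  · intro b hb
    exact ⟨⟨b, hS b hb⟩, by simpa using (h ⟨b, hS b hb⟩).2 hb, rfl⟩
  · intro a _
    rfl

theorem deg_nb {n : ℕ} (G : SimpleGraph (Fin n)) [DecidableRel G.Adj] (w : Fin n)
    (S : Finset ℕ) (hS : ∀ x ∈ S, x < n) (h : ∀ x : Fin n, G.Adj w x ↔ x.val ∈ S) :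
    (G.degree w : ℝ) = S.card := by
  have := sum_nb G w S hS h (fun _ => 1)
  simpa using this

/-- neighbours of a non-central vertex in `G0` -/
def nb0 (t a : ℕ) : Finset ℕ :=
  if 2 * t < a then {0} else if a % 2 = 1 then {0, a + 1} else {0, a - 1}

/-- neighbours of a non-central vertex in `G5` -/
def nb5 (s a : ℕ) : Finset ℕ :=
  if 2 * s + 3 < a then {0}
  else if a = 2 * s + 2 then {2 * s + 1, 2 * s + 3}
  else if 2 * s < a then {0, 2 * s + 2}
  else if a % 2 = 1 then {0, a + 1} else {0, a - 1}

theorem nb0_adj (n t : ℕ) (w x : Fin n) (hw : w.val ≠ 0) :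
    (G0 n t).Adj w x ↔ x.val ∈ nb0 t w.val := by
  rw [G0, SimpleGraph.fromRel_adj, nb0, Nat.odd_iff, Nat.odd_iff, ne_eq, Fin.ext_iff]
  split_ifs <;> simp only [Finset.mem_insert, Finset.mem_singleton] <;> omega

theorem nb5_adj (n s : ℕ) (w x : Fin n) (hw : w.val ≠ 0) :
    (G5g n (s + 1)).Adj w x ↔ x.val ∈ nb5 s w.val := by
  rw [G5g, SimpleGraph.fromRel_adj, nb5, Nat.odd_iff, Nat.odd_iff, ne_eq, Fin.ext_iff]
  split_ifs <;> simp only [Finset.mem_insert, Finset.mem_singleton] <;> omega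

theorem nb0_lt (n t : ℕ) (h : 2 * t < n) (w : Fin n) : ∀ x ∈ nb0 t w.val, x < n := by
  intro x
  have := w.2
  unfold nb0
  split_ifs <;> simp only [Finset.mem_insert, Finset.mem_singleton] <;> omega

theorem nb5_lt (n t : ℕ) (h : 2 * t + 4 ≤ n) (w : Fin n) : ∀ x ∈ nb5 t w.val, x < n := by
  intro x
  have := w.2
  unfold nb5
  split_ifs <;> simp only [Finset.mem_insert, Finset.mem_singleton] <;> omega

theorem nb0_card (t a : ℕ) (ha : a ≠ 0) : (nb0 t a).card = if 2 * t < a then 1 else 2 := by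
  unfold nb0
  split_ifs
  · simp
  · rw [Finset.card_pair (by omega)]
  · rw [Finset.card_pair (by omega)]

theorem nb5_card (t a : ℕ) (ha : a ≠ 0) :
    (nb5 t a).card = if 2 * t + 3 < a then 1 else 2 := by
  unfold nb5
  split_ifs
  · simp
  all_goals rw [Finset.card_pair (by omega)]

theorem gam0_nb (t a b : ℕ) (ha : a ≠ 0) :
    ((nb0 t a).card : ℝ) * gam0 t a b - ∑ x ∈ nb0 t a, gam0 t x b
      = if a = b then 1 else 0 := by
  rw [nb0_card t a ha, nb0]
  by_cases h1 : 2 * t < a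
  · rw [if_pos h1, if_pos h1, Finset.sum_singleton, gam0_zero, gam0_pend t a b h1]
    split_ifs <;> first | (exfalso; omega) | norm_num
  rw [if_neg h1, if_neg h1, gam0_tri t a b ha (by omega)]
  by_cases h2 : a % 2 = 1
  · rw [if_pos h2, Finset.sum_pair (by omega), gam0_zero,
      gam0_tri t (a + 1) b (by omega) (by omega)]
    split_ifs <;> first | (exfalso; omega) | norm_num
  · rw [if_neg h2, Finset.sum_pair (by omega), gam0_zero,
      gam0_tri t (a - 1) b (by omega) (by omega)]
    split_ifs <;> first | (exfalso; omega) | norm_num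

theorem gam5_nb (t a b : ℕ) (ha : a ≠ 0) :
    ((nb5 t a).card : ℝ) * gam5 t a b - ∑ x ∈ nb5 t a, gam5 t x b
      = if a = b then 1 else 0 := by
  rw [nb5_card t a ha, nb5]
  by_cases h1 : 2 * t + 3 < a
  · rw [if_pos h1, if_pos h1, Finset.sum_singleton, gam5_zero, gam5_pend t a b h1]
    split_ifs <;> first | (exfalso; omega) | norm_num
  rw [if_neg h1, if_neg h1]
  by_cases h2 : a = 2 * t + 2
  · subst h2
    rw [if_pos rfl, Finset.sum_pair (by omega), gam5_q1, gam5_q2, gam5_q3]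
    split_ifs <;> first | (exfalso; omega) | norm_num
  rw [if_neg h2]
  by_cases h3 : 2 * t < a
  · have : a = 2 * t + 1 ∨ a = 2 * t + 3 := by omega
    rw [if_pos h3, Finset.sum_pair (by omega), gam5_zero, gam5_q2]
    rcases this with rfl | rfl
    · rw [gam5_q1]
      split_ifs <;> first | (exfalso; omega) | norm_num
    · rw [gam5_q3]
      split_ifs <;> first | (exfalso; omega) | norm_num
  rw [if_neg h3, gam5_tri t a b ha (by omega)]
  by_cases h4 : a % 2 = 1
  · rw [if_pos h4, Finset.sum_pair (by omega), gam5_zero,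
      gam5_tri t (a + 1) b (by omega) (by omega)]
    split_ifs <;> first | (exfalso; omega) | norm_num
  · rw [if_neg h4, Finset.sum_pair (by omega), gam5_zero,
      gam5_tri t (a - 1) b (by omega) (by omega)]
    split_ifs <;> first | (exfalso; omega) | norm_num

end Graphs

section Final

/-- degree in `G0` -/
noncomputable def dg0 (n t a : ℕ) : ℝ :=
  if a = 0 then (n : ℝ) - 1 else if 2 * t < a then 1 else 2

/-- degree in `G5` -/
noncomputable def dg5 (n s a : ℕ) : ℝ :=
  if a = 0 then (n : ℝ) - 2 else if 2 * s + 3 < a then 1 else 2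

/-- row sums of the Green function of `G0` -/
noncomputable def rs0 (a : ℕ) : ℝ := if a = 0 then 0 else 1

/-- row sums of the Green function of `G5` -/
noncomputable def rs5 (s a : ℕ) : ℝ :=
  if a = 0 then 0 else if a ≤ 2 * s ∨ 2 * s + 3 < a then 1
  else if a = 2 * s + 2 then 2 else 3 / 2

theorem dg0_eq (n t : ℕ) (h : 2 * t < n) (w : Fin n) [DecidableRel (G0 n t).Adj] :
    ((G0 n t).degree w : ℝ) = dg0 n t w := by
  unfold dg0
  by_cases hw : w.val = 0
  · rw [deg_nb (G0 n t) w ((range n).erase 0) (by simp)]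
    · rw [Finset.card_erase_of_mem (by simp; omega), if_pos hw, Finset.card_range,
        Nat.cast_sub (by omega)]
      simp
    · intro x
      have := x.2
      rw [G0, SimpleGraph.fromRel_adj, ne_eq, Fin.ext_iff]
      simp only [Finset.mem_erase, Finset.mem_range]
      omega
  · rw [deg_nb (G0 n t) w (nb0 t w) (nb0_lt n t h w) (fun x => nb0_adj n t w x hw),
      nb0_card t w hw, if_neg hw]
    split_ifs <;> simp

theorem dg5_eq (n s : ℕ) (h : 2 * s + 4 ≤ n) (w : Fin n)
    [DecidableRel (G5g n (s + 1)).Adj] :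
    ((G5g n (s + 1)).degree w : ℝ) = dg5 n s w := by
  unfold dg5
  by_cases hw : w.val = 0
  · rw [deg_nb (G5g n (s + 1)) w (((range n).erase 0).erase (2 * s + 2)) (by simp)]
    · rw [Finset.card_erase_of_mem (by simp; omega), Finset.card_erase_of_mem (by simp; omega),
        if_pos hw, Finset.card_range, Nat.sub_sub, Nat.cast_sub (by omega)]
      norm_num
    · intro x
      have := x.2
      rw [G5g, SimpleGraph.fromRel_adj, ne_eq, Fin.ext_iff, Nat.odd_iff, Nat.odd_iff]
      simp only [Finset.mem_erase, Finset.mem_range]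
      omega
  · rw [deg_nb (G5g n (s + 1)) w (nb5 s w) (nb5_lt n s h w) (fun x => nb5_adj n s w x hw),
      nb5_card s w hw, if_neg hw]
    split_ifs <;> simp

theorem sum_two (n i j : ℕ) (hi : i < n) (hj : j < n) (x y : ℝ) :
    ∑ b ∈ range n, ((if b = i then x else 0) + (if b = j then y else 0)) = x + y := by
  rw [Finset.sum_add_distrib, Finset.sum_ite_eq', Finset.sum_ite_eq',
    if_pos (by simpa using hi), if_pos (by simpa using hj)]

theorem sum_three (n i j k : ℕ) (hi : i < n) (hj : j < n) (hk : k < n) (x y z : ℝ) :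
    ∑ b ∈ range n, ((if b = i then x else 0) + (if b = j then y else 0)
      + (if b = k then z else 0)) = x + y + z := by
  rw [Finset.sum_add_distrib, sum_two n i j hi hj, Finset.sum_ite_eq',
    if_pos (by simpa using hk)]

set_option maxHeartbeats 4000000 in
theorem rs0_eq (n t a : ℕ) (h : 2 * t < n) (ha : a < n) :
    ∑ b ∈ range n, gam0 t a b = rs0 a := by
  by_cases h0 : a = 0
  · simp [h0, gam0, rs0]
  rw [rs0, if_neg h0]
  by_cases h1 : 2 * t < a
  · rw [Finset.sum_congr rfl (g := fun b => (if b = a then (1 : ℝ) else 0)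
      + (if b = a then 0 else 0)), sum_two n a a ha ha]
    · norm_num
    · intro b _
      rw [gam0_pend t a b h1]
      split_ifs <;> first | (exfalso; omega) | norm_num
  have key : ∀ c, c < n → c ≠ a → c ≠ 0 → (c + 1) / 2 = (a + 1) / 2 →
      ∑ b ∈ range n, gam0 t a b = 1 := by
    intro c hc hca hc0 hcc
    rw [Finset.sum_congr rfl (g := fun b => (if b = a then (2 / 3 : ℝ) else 0)
      + (if b = c then 1 / 3 else 0)), sum_two n a c ha hc]
    · norm_num
    · intro b _
      rw [gam0_tri t a b h0 (by omega)]
      split_ifs <;> first | (exfalso; omega) | norm_num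
  by_cases h2 : a % 2 = 1
  · exact key (a + 1) (by omega) (by omega) (by omega) (by omega)
  · exact key (a - 1) (by omega) (by omega) (by omega) (by omega)

set_option maxHeartbeats 4000000 in
theorem rs5_eq (n t a : ℕ) (h : 2 * t + 4 ≤ n) (ha : a < n) :
    ∑ b ∈ range n, gam5 t a b = rs5 t a := by
  by_cases h0 : a = 0
  · simp [h0, gam5, rs5]
  rw [rs5, if_neg h0]
  by_cases h1 : 2 * t + 3 < a
  · rw [if_pos (Or.inr h1), Finset.sum_congr rfl (g := fun b => (if b = a then (1 : ℝ) else 0)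
      + (if b = a then 0 else 0)), sum_two n a a ha ha]
    · norm_num
    · intro b _
      rw [gam5_pend t a b h1]
      split_ifs <;> first | (exfalso; omega) | norm_num
  by_cases h3 : a ≤ 2 * t
  · rw [if_pos (Or.inl h3)]
    have key : ∀ c, c < n → c ≠ a → c ≠ 0 → (c + 1) / 2 = (a + 1) / 2 →
        ∑ b ∈ range n, gam5 t a b = 1 := by
      intro c hc hca hc0 hcc
      rw [Finset.sum_congr rfl (g := fun b => (if b = a then (2 / 3 : ℝ) else 0)
        + (if b = c then 1 / 3 else 0)), sum_two n a c ha hc]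
      · norm_num
      · intro b _
        rw [gam5_tri t a b h0 h3]
        split_ifs <;> first | (exfalso; omega) | norm_num
    by_cases h2 : a % 2 = 1
    · exact key (a + 1) (by omega) (by omega) (by omega) (by omega)
    · exact key (a - 1) (by omega) (by omega) (by omega) (by omega)
  rw [if_neg (by omega)]
  have : a = 2 * t + 1 ∨ a = 2 * t + 2 ∨ a = 2 * t + 3 := by omega
  rcases this with rfl | rfl | rfl
  · rw [Finset.sum_congr rfl (g := fun b => (if b = 2 * t + 1 then (3 / 4 : ℝ) else 0)
      + (if b = 2 * t + 2 then 1 / 2 else 0) + (if b = 2 * t + 3 then 1 / 4 else 0)),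
      sum_three n _ _ _ (by omega) (by omega) (by omega)]
    · rw [if_neg (by omega)]; norm_num
    · intro b _
      rw [gam5_q1]
      split_ifs <;> first | (exfalso; omega) | norm_num
  · rw [Finset.sum_congr rfl (g := fun b => (if b = 2 * t + 1 then (1 / 2 : ℝ) else 0)
      + (if b = 2 * t + 2 then 1 else 0) + (if b = 2 * t + 3 then 1 / 2 else 0)),
      sum_three n _ _ _ (by omega) (by omega) (by omega)]
    · rw [if_pos rfl]; norm_num
    · intro b _
      rw [gam5_q2]
      split_ifs <;> first | (exfalso; omega) | norm_num
  · rw [Finset.sum_congr rfl (g := fun b => (if b = 2 * t + 1 then (1 / 4 : ℝ) else 0)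
      + (if b = 2 * t + 2 then 1 / 2 else 0) + (if b = 2 * t + 3 then 3 / 4 else 0)),
      sum_three n _ _ _ (by omega) (by omega) (by omega)]
    · rw [if_neg (by omega)]; norm_num
    · intro b _
      rw [gam5_q3]
      split_ifs <;> first | (exfalso; omega) | norm_num

theorem degRes_G0 (n t : ℕ) (h : 2 * t < n) :
    degRes (G0 n t) = (n : ℝ) * ∑ a ∈ range n, dg0 n t a * gam0 t a a
      + (∑ a ∈ range n, dg0 n t a) * ∑ a ∈ range n, gam0 t a a
      - 2 * ∑ a ∈ range n, dg0 n t a * rs0 a := by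
  classical
  rw [degRes_green (G0 n t) ⟨0, by omega⟩ (fun a b => gam0 t a b)
    (fun a b => gam0_symm t a b)]
  · simp only [dg0_eq n t h, Fintype.card_fin]
    have e : ∀ u : Fin n, ∑ v : Fin n, gam0 t u v = rs0 u := by
      intro u
      rw [Fin.sum_univ_eq_sum_range (fun b => gam0 t u b) n, rs0_eq n t u h u.2]
    simp only [e]
    rw [Fin.sum_univ_eq_sum_range (fun a => dg0 n t a * gam0 t a a) n,
      Fin.sum_univ_eq_sum_range (fun a => dg0 n t a) n,
      Fin.sum_univ_eq_sum_range (fun a => gam0 t a a) n,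
      Fin.sum_univ_eq_sum_range (fun a => dg0 n t a * rs0 a) n]
  · intro v w hw
    have hw' : w.val ≠ 0 := fun h => hw (Fin.ext h)
    rw [sum_nb (G0 n t) w (nb0 t w) (nb0_lt n t h w) (fun x => nb0_adj n t w x hw')
      (fun x => gam0 t x v),
      deg_nb (G0 n t) w (nb0 t w) (nb0_lt n t h w) (fun x => nb0_adj n t w x hw'),
      gam0_nb t w v hw']
    simp only [Fin.ext_iff]

theorem degRes_G5 (n s : ℕ) (h : 2 * s + 4 ≤ n) :
    degRes (G5g n (s + 1)) = (n : ℝ) * ∑ a ∈ range n, dg5 n s a * gam5 s a a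
      + (∑ a ∈ range n, dg5 n s a) * ∑ a ∈ range n, gam5 s a a
      - 2 * ∑ a ∈ range n, dg5 n s a * rs5 s a := by
  classical
  rw [degRes_green (G5g n (s + 1)) ⟨0, by omega⟩ (fun a b => gam5 s a b)
    (fun a b => gam5_symm s a b)]
  · simp only [dg5_eq n s h, Fintype.card_fin]
    have e : ∀ u : Fin n, ∑ v : Fin n, gam5 s u v = rs5 s u := by
      intro u
      rw [Fin.sum_univ_eq_sum_range (fun b => gam5 s u b) n, rs5_eq n s u h u.2]
    simp only [e]
    rw [Fin.sum_univ_eq_sum_range (fun a => dg5 n s a * gam5 s a a) n,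
      Fin.sum_univ_eq_sum_range (fun a => dg5 n s a) n,
      Fin.sum_univ_eq_sum_range (fun a => gam5 s a a) n,
      Fin.sum_univ_eq_sum_range (fun a => dg5 n s a * rs5 s a) n]
  · intro v w hw
    have hw' : w.val ≠ 0 := fun h => hw (Fin.ext h)
    rw [sum_nb (G5g n (s + 1)) w (nb5 s w) (nb5_lt n s h w) (fun x => nb5_adj n s w x hw')
      (fun x => gam5 s x v),
      deg_nb (G5g n (s + 1)) w (nb5 s w) (nb5_lt n s h w) (fun x => nb5_adj n s w x hw'),
      gam5_nb s w v hw']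
    simp only [Fin.ext_iff]

theorem sum_diff (n s : ℕ) (h : 2 * s + 4 ≤ n) (f g : ℕ → ℝ) (x y z : ℝ)
    (hfg : ∀ a, f a - g a = (if a = 2 * s + 1 then x else 0)
      + (if a = 2 * s + 2 then y else 0) + (if a = 2 * s + 3 then z else 0)) :
    ∑ a ∈ range n, f a = ∑ a ∈ range n, g a + (x + y + z) := by
  rw [← sum_three n (2 * s + 1) (2 * s + 2) (2 * s + 3) (by omega) (by omega) (by omega),
    ← Finset.sum_add_distrib]
  refine Finset.sum_congr rfl fun a _ => ?_
  rw [← hfg]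
  ring

theorem sum_dg0 (n t : ℕ) (h : 2 * t < n) :
    ∑ a ∈ range n, dg0 n t a = 2 * ((n : ℝ) - 1 + t) := by
  have e : ∀ a ∈ range n, dg0 n t a
      = ((if a = 0 then (n : ℝ) - 3 else 0) + 1) + (if a < 2 * t + 1 then 1 else 0) := by
    intro a _
    unfold dg0
    split_ifs <;> first | (exfalso; omega) | ring
  have hf : (range n).filter (fun a => a < 2 * t + 1) = range (2 * t + 1) := by
    ext a
    simp only [Finset.mem_filter, Finset.mem_range]
    omega
  rw [Finset.sum_congr rfl e, Finset.sum_add_distrib, Finset.sum_add_distrib,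
    Finset.sum_ite_eq', if_pos (by simp; omega), Finset.sum_boole, hf]
  simp
  ring

theorem sum_dg5 (n s : ℕ) (h : 2 * s + 4 ≤ n) :
    ∑ a ∈ range n, dg5 n s a = ∑ a ∈ range n, dg0 n (s + 1) a := by
  have e : ∀ a ∈ range n, dg5 n s a = dg0 n (s + 1) a
      + ((if a = 0 then (-1 : ℝ) else 0) + (if a = 2 * s + 3 then 1 else 0)) := by
    intro a _
    unfold dg0 dg5
    split_ifs <;> first | (exfalso; omega) | ring
  rw [Finset.sum_congr rfl e, Finset.sum_add_distrib,
    sum_two n 0 (2 * s + 3) (by omega) (by omega)]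
  ring

end Final

/-- `D_R(G5) - D_R(G⁰(n,t)) = (5/3)n + (1/3)t - 31/3`. -/
theorem stmt_10 (n t : ℕ) (h1 : 2 * t + 2 ≤ n) (ht : 1 ≤ t) :
    degRes (G5g n t) - degRes (G0 n t) = (5 / 3) * (n : ℝ) + (1 / 3) * t - 31 / 3 := by
  obtain ⟨s, rfl⟩ : ∃ s, t = s + 1 := ⟨t - 1, by omega⟩
  have h : 2 * s + 4 ≤ n := by omega
  rw [degRes_G5 n s h, degRes_G0 n (s + 1) (by omega), sum_dg5 n s h,
    sum_dg0 n (s + 1) (by omega)]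
  rw [sum_diff n s h (fun a => dg5 n s a * gam5 s a a)
      (fun a => dg0 n (s + 1) a * gam0 (s + 1) a a) (1 / 6) (2 / 3) (1 / 2),
    sum_diff n s h (fun a => gam5 s a a) (fun a => gam0 (s + 1) a a) (1 / 12) (1 / 3) (-1 / 4),
    sum_diff n s h (fun a => dg5 n s a * rs5 s a) (fun a => dg0 n (s + 1) a * rs0 a) 1 2 2]
  · push_cast
    ring
  · intro a
    simp only [dg5, dg0, rs5, rs0]
    split_ifs <;> first | (exfalso; omega) | norm_num
  · intro a
    simp only [gam5, gam0]
    split_ifs <;> first | (exfalso; omega) | norm_num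
  · intro a
    simp only [gam5, gam0, dg5, dg0]
    split_ifs <;> first | (exfalso; omega) | norm_num
end
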